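/- arXiv:0712.1047 — 2 statements merged into one kernel-verified Lean document; each statement's English description precedes it below -/
import Mathlib

section
/- If (E, F, ≤_E) is a supersolvable antimatroid, then the natural edge-labelling of the lattice P of feasible sets (labelling a cover X ⋖ Y by the unique element of Y \ X) is an S_n EL-labelling: the labels along any maximal chain of any interval [A, B] form a permutation of B \ A, and each interval has a unique maximal chain whose sequence of labels is increasing with respect to ≤_E. -/
namespace SortingPaper

/-- A maximal chain `c 0 = A ⊂ c 1 ⊂ ⋯ ⊂ c k = B` in the interval `[A, B]` of the
lattice of feasible sets of a set system `F`, ordered by inclusion. -/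
def IsMaxChain {E : Type*} (F : Finset (Finset E)) (A B : Finset E) (k : ℕ)
    (c : ℕ → Finset E) : Prop :=
  c 0 = A ∧ c k = B ∧
  (∀ i ≤ k, c i ∈ F ∧ A ⊆ c i ∧ c i ⊆ B) ∧
  (∀ i < k, c i ⊂ c (i + 1)) ∧
  (∀ i < k, ¬ ∃ D ∈ F, A ⊆ D ∧ D ⊆ B ∧ c i ⊂ D ∧ D ⊂ c (i + 1))

/-- The chain has increasing labels: the unique new element added at each step
increases along the chain. -/
def HasIncreasingLabels {E : Type*} [LinearOrder E] (k : ℕ) (c : ℕ → Finset E) : Prop :=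
  ∀ i, i + 2 ≤ k → ∀ x ∈ c (i + 1) \ c i, ∀ y ∈ c (i + 2) \ c (i + 1), x < y

theorem step_of_maxChain {E : Type*} [LinearOrder E]
    (F : Finset (Finset E))
    (hss : ∀ A ∈ F, ∀ B ∈ F, ∀ (h : ¬ B ⊆ A),
      insert ((B \ A).min' (Finset.sdiff_nonempty.mpr h)) A ∈ F)
    {A B : Finset E} {k : ℕ} {c : ℕ → Finset E} (hc : IsMaxChain F A B k c) :
    ∀ i < k, ∃ x, x ∉ c i ∧ c (i + 1) = insert x (c i) := by
  obtain ⟨-, -, h3, h4, h5⟩ := hc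
  intro i hi
  have hn : ¬ c (i + 1) ⊆ c i := (h4 i hi).2
  have hm := Finset.min'_mem _ (Finset.sdiff_nonempty.mpr hn)
  have hF := hss _ (h3 i hi.le).1 _ (h3 (i + 1) hi).1 hn
  generalize (c (i + 1) \ c i).min' _ = m at hm hF
  rw [Finset.mem_sdiff] at hm
  refine ⟨m, hm.2, ?_⟩
  by_contra hne
  have hsub : insert m (c i) ⊆ c (i + 1) := Finset.insert_subset hm.1 (h4 i hi).1
  exact h5 i hi ⟨insert m (c i), hF, (h3 i hi.le).2.1.trans (Finset.subset_insert _ _),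
    hsub.trans (h3 (i + 1) hi).2.2, Finset.ssubset_insert hm.2,
    lt_of_le_of_ne hsub (Ne.symm hne)⟩

theorem card_of_steps {E : Type*} [LinearOrder E] {k : ℕ} {c : ℕ → Finset E}
    (h : ∀ i < k, ∃ x, x ∉ c i ∧ c (i + 1) = insert x (c i)) :
    ∀ i ≤ k, (c i).card = (c 0).card + i := by
  intro i
  induction i with
  | zero => simp
  | succ i ih =>
    intro hi
    obtain ⟨x, hx, he⟩ := h i hi
    rw [he, Finset.card_insert_of_notMem hx, ih (by omega)]
    omega

/-- The greedy chain. -/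
def greedy {E : Type*} [LinearOrder E] (A B : Finset E) : ℕ → Finset E
  | 0 => A
  | i + 1 => if h : (B \ greedy A B i).Nonempty then
      insert ((B \ greedy A B i).min' h) (greedy A B i) else greedy A B i

theorem greedy_succ {E : Type*} [LinearOrder E] (A B : Finset E) (i : ℕ)
    (h : (B \ greedy A B i).Nonempty) :
    greedy A B (i + 1) = insert ((B \ greedy A B i).min' h) (greedy A B i) := by
  rw [greedy, dif_pos h]

theorem incr_le {E : Type*} [LinearOrder E] {k : ℕ} {c : ℕ → Finset E}
    (h : ∀ i < k, c i ⊂ c (i + 1)) (hi : HasIncreasingLabels k c) (i : ℕ) :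
    ∀ d, i + d + 1 ≤ k → ∀ x ∈ c (i + 1) \ c i, ∀ y ∈ c (i + d + 1) \ c (i + d),
      d = 0 ∨ x < y := by
  intro d
  induction d with
  | zero => intros; left; rfl
  | succ d ih =>
    intro hd x hx y hy
    right
    obtain ⟨z, hz⟩ := Finset.sdiff_nonempty.mpr (h (i + d) (by omega)).2
    have hzy := hi (i + d) (by omega) z hz y hy
    rcases ih (by omega) x hx z hz with h0 | h0
    · subst h0
      exact hi i (by omega) x hx y hy
    · exact h0.trans hzy

theorem incr_min {E : Type*} [LinearOrder E] {k : ℕ} {c : ℕ → Finset E}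
    (hs : ∀ i < k, ∃ x, x ∉ c i ∧ c (i + 1) = insert x (c i))
    (h : ∀ i < k, c i ⊂ c (i + 1)) (hi : HasIncreasingLabels k c) (i : ℕ) :
    ∀ d, i + d ≤ k → ∀ x ∈ c (i + 1) \ c i, ∀ y ∈ c (i + d) \ c i, x ≤ y := by
  intro d
  induction d with
  | zero => intro _ x _ y hy; simp at hy
  | succ d ih =>
    intro hd x hx y hy
    by_cases hyd : y ∈ c (i + d)
    · exact ih (by omega) x hx y (Finset.mem_sdiff.mpr ⟨hyd, (Finset.mem_sdiff.mp hy).2⟩)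
    · rcases incr_le h hi i d hd x hx y
        (Finset.mem_sdiff.mpr ⟨(Finset.mem_sdiff.mp hy).1, hyd⟩) with h0 | h0
      · subst h0
        obtain ⟨z, hz, he⟩ := hs i hd
        have e1 : x = z := by
          rw [he] at hx; simp only [Finset.mem_sdiff, Finset.mem_insert] at hx; tauto
        have e2 : y = z := by
          have hy' : y ∈ c (i + 1) \ c i := hy
          rw [he] at hy'; simp only [Finset.mem_sdiff, Finset.mem_insert] at hy'; tauto
        rw [e1, e2]
      · exact h0.le

/-- in the lattice of feasible sets of a supersolvable antimatroid, the
natural edge-labelling (labelling a cover `X ⋖ Y` by the unique element of `Y \ X`) is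
an `S_n` EL-labelling: along any maximal chain of an interval `[A, B]`, each step adds
exactly one element, the labels form a permutation of `B \ A` (so all maximal chains
have length `|B \ A|`), and there is a unique maximal chain whose labels increase. -/
theorem supersolvable_antimatroid_EL_labelling {E : Type*} [Fintype E] [LinearOrder E]
    (F : Finset (Finset E)) (h0 : ∅ ∈ F)
    (hss : ∀ A ∈ F, ∀ B ∈ F, ∀ (h : ¬ B ⊆ A),
      insert ((B \ A).min' (Finset.sdiff_nonempty.mpr h)) A ∈ F)
    (A B : Finset E) (hA : A ∈ F) (hB : B ∈ F) (hAB : A ⊆ B) :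
    (∀ (k : ℕ) (c : ℕ → Finset E), IsMaxChain F A B k c →
      k = (B \ A).card ∧
      (∀ i < k, ∃ x, x ∉ c i ∧ c (i + 1) = insert x (c i)) ∧
      (Finset.range k).biUnion (fun i => c (i + 1) \ c i) = B \ A) ∧
    (∃ c : ℕ → Finset E, IsMaxChain F A B ((B \ A).card) c ∧
      HasIncreasingLabels ((B \ A).card) c ∧
      ∀ c' : ℕ → Finset E, IsMaxChain F A B ((B \ A).card) c' →
        HasIncreasingLabels ((B \ A).card) c' →
        ∀ i ≤ (B \ A).card, c' i = c i) := by
  refine ⟨?_, greedy A B, ?_⟩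
  · intro k c hc
    have hs := step_of_maxChain F hss hc
    have hcard := card_of_steps hs k le_rfl
    obtain ⟨h1, h2, h3, h4, h5⟩ := hc
    rw [h1, h2] at hcard
    refine ⟨?_, hs, ?_⟩
    · rw [Finset.card_sdiff_of_subset hAB]; omega
    · have key : ∀ j ≤ k, (Finset.range j).biUnion (fun i => c (i + 1) \ c i) = c j \ A := by
        intro j
        induction j with
        | zero => simp [h1]
        | succ j ih =>
          intro hj
          rw [Finset.range_add_one, Finset.biUnion_insert, ih (by omega)]
          have ha := (h3 j (by omega)).2.1
          have hb := (h4 j hj).1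
          ext x
          have ha' := @ha x
          have hb' := @hb x
          simp only [Finset.mem_union, Finset.mem_sdiff]
          tauto
      rw [key k le_rfl, h2]
  · have hk : (B \ A).card + A.card = B.card := Finset.card_sdiff_add_card_eq_card hAB
    have hg : ∀ i ≤ (B \ A).card, greedy A B i ∈ F ∧ A ⊆ greedy A B i ∧ greedy A B i ⊆ B ∧
        (greedy A B i).card = A.card + i := by
      intro i
      induction i with
      | zero => intro _; exact ⟨hA, subset_rfl, hAB, rfl⟩
      | succ i ih =>
        intro hi
        obtain ⟨a1, a2, a3, a4⟩ := ih (by omega)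
        have hn : ¬ B ⊆ greedy A B i := fun hh => by
          have := Finset.card_le_card hh
          omega
        have hne := Finset.sdiff_nonempty.mpr hn
        have hm := Finset.mem_sdiff.mp (Finset.min'_mem _ hne)
        rw [greedy_succ A B i hne]
        refine ⟨hss _ a1 _ hB hn, a2.trans (Finset.subset_insert _ _),
          Finset.insert_subset hm.1 a3, ?_⟩
        rw [Finset.card_insert_of_notMem hm.2, a4]; omega
    have hne : ∀ i < (B \ A).card, (B \ greedy A B i).Nonempty := by
      intro i hi
      refine Finset.sdiff_nonempty.mpr fun hh => ?_
      have := Finset.card_le_card hh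
      have := (hg i hi.le).2.2.2
      omega
    refine ⟨⟨rfl, ?_, ?_, ?_, ?_⟩, ?_, ?_⟩
    · obtain ⟨a1, a2, a3, a4⟩ := hg _ le_rfl
      exact Finset.eq_of_subset_of_card_le a3 (by omega)
    · intro i hi
      obtain ⟨a1, a2, a3, a4⟩ := hg i hi
      exact ⟨a1, a2, a3⟩
    · intro i hi
      rw [greedy_succ A B i (hne i hi)]
      exact Finset.ssubset_insert (Finset.mem_sdiff.mp (Finset.min'_mem _ (hne i hi))).2
    · rintro i hi ⟨D, -, -, -, hD1, hD2⟩
      have b1 := Finset.card_lt_card hD1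
      have b2 := Finset.card_lt_card hD2
      have b3 := (hg i hi.le).2.2.2
      have b4 := (hg (i + 1) hi).2.2.2
      omega
    · intro i hi x hx y hy
      have hy1 := (Finset.mem_sdiff.mp hy)
      have hyB : y ∈ B := (hg (i + 2) hi).2.2.1 hy1.1
      have hy2 := hy1.2
      rw [greedy_succ A B i (hne i (by omega))] at hx hy2
      rw [Finset.mem_insert, not_or] at hy2
      have hxe : x = (B \ greedy A B i).min' (hne i (by omega)) := by
        simp only [Finset.mem_sdiff, Finset.mem_insert] at hx; tauto
      rw [hxe]
      exact lt_of_le_of_ne (Finset.min'_le _ _ (Finset.mem_sdiff.mpr ⟨hyB, hy2.2⟩))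
        (Ne.symm hy2.1)
    · intro c hc hinc i
      have hs := step_of_maxChain F hss hc
      obtain ⟨h1, h2, h3, h4, h5⟩ := hc
      induction i with
      | zero => intro _; exact h1
      | succ i ih =>
        intro hi
        have ihe := ih (by omega)
        obtain ⟨x, hx, he⟩ := hs i hi
        have hmin := incr_min hs h4 hinc i ((B \ A).card - i) (by omega) x
          (by rw [he]; simp [hx])
        rw [show i + ((B \ A).card - i) = (B \ A).card by omega, h2] at hmin
        have hxB : x ∈ B := (h3 (i + 1) hi).2.2 (by rw [he]; simp)
        rw [greedy_succ A B i (hne i hi), he]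
        rw [ihe] at hmin hx ⊢
        congr 1
        apply le_antisymm
        · exact hmin _ (Finset.min'_mem _ _)
        · exact Finset.min'_le _ _ (Finset.mem_sdiff.mpr ⟨hxB, hx⟩)

end SortingPaper
end

section
/- Let (W,S) be an infinite Coxeter system and ω a semi-infinite word in S such that infinitely many group elements occur as subwords of ω. Then the ω-sorting order on W_ω is a lattice: every pair of elements has a join (given by union of index sets of ω-sorted words) and a meet. -/
namespace SortingPaper

variable {B : Type*} {M : CoxeterMatrix B} {W : Type*} [Group W]

/-- Lexicographic comparison of index sets. -/
def lexLE (A C : Finset ℕ) : Prop :=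
  A = C ∨ ∃ k, k ∈ A ∧ k ∉ C ∧ ∀ j < k, (j ∈ A ↔ j ∈ C)

/-- The (finite) subword of a semi-infinite word `ω : ℕ → B` with index set `A`. -/
def subwordInf (ω : ℕ → B) (A : Finset ℕ) : List B :=
  (A.sort (· ≤ ·)).map ω

/-- `A` is the index set of an ω-sorted word for the semi-infinite word `ω`. -/
def IsSortedInf (cs : CoxeterSystem M W) (ω : ℕ → B) (A : Finset ℕ) : Prop :=
  cs.IsReduced (subwordInf ω A) ∧
  ∀ C : Finset ℕ, cs.IsReduced (subwordInf ω C) →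
    cs.wordProd (subwordInf ω C) = cs.wordProd (subwordInf ω A) → lexLE A C

section Strong

variable (cs : CoxeterSystem M W)

open Classical in
/-- The generators of the action on `W × ZMod 2`. -/
noncomputable def gen (i : B) : Function.End (W × ZMod 2) :=
  fun x => (cs.simple i * x.1 * cs.simple i, x.2 + if x.1 = cs.simple i then 1 else 0)

lemma swap_pow (i j : B) (n : ℕ) :
    cs.simple j * (cs.simple i * cs.simple j) ^ n =
      ((cs.simple i * cs.simple j) ^ n)⁻¹ * cs.simple j := by
  induction n with
  | zero => simp
  | succ n ih =>
    rw [pow_succ, ← mul_assoc, ih, mul_inv_rev, mul_inv_rev, cs.inv_simple, cs.inv_simple]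
    have : (cs.simple j * cs.simple i) * ((cs.simple i * cs.simple j) ^ n)⁻¹ =
        ((cs.simple i * cs.simple j) ^ n)⁻¹ * (cs.simple j * cs.simple i) := by
      have h : cs.simple j * cs.simple i = (cs.simple i * cs.simple j)⁻¹ := by simp
      rw [h]
      exact ((Commute.refl (cs.simple i * cs.simple j)).pow_right n).inv_inv
    rw [this]
    simp only [mul_assoc]

lemma conj_eq_iff (i j : B) (n : ℕ) (t : W) :
    (cs.simple i * cs.simple j) ^ n * t * ((cs.simple i * cs.simple j) ^ n)⁻¹ = cs.simple j ↔
      t = ((cs.simple i * cs.simple j) ^ (2 * n))⁻¹ * cs.simple j := by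
  rw [mul_inv_eq_iff_eq_mul, swap_pow, ← eq_inv_mul_iff_mul_eq, two_mul, pow_add, mul_inv_rev,
    mul_assoc]

lemma conj_eq_iff2 (i j : B) (n : ℕ) (t : W) :
    cs.simple j * ((cs.simple i * cs.simple j) ^ n * t * ((cs.simple i * cs.simple j) ^ n)⁻¹)
        * cs.simple j = cs.simple i ↔
      t = ((cs.simple i * cs.simple j) ^ (2 * n + 1))⁻¹ * cs.simple j := by
  have h1 : ∀ y : W, cs.simple j * y * cs.simple j = cs.simple i ↔
      y = cs.simple j * cs.simple i * cs.simple j := by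
    intro y
    constructor
    · intro h; rw [← h]; simp [mul_assoc]
    · rintro rfl; simp [mul_assoc]
  rw [h1, mul_inv_eq_iff_eq_mul, mul_assoc _ (cs.simple j), swap_pow, ← eq_inv_mul_iff_mul_eq]
  have h : cs.simple j * cs.simple i = (cs.simple i * cs.simple j)⁻¹ := by simp
  rw [h, ← mul_assoc, ← mul_assoc, ← mul_inv_rev, ← mul_inv_rev]
  rw [show (cs.simple i * cs.simple j) ^ n * ((cs.simple i * cs.simple j) *
    (cs.simple i * cs.simple j) ^ n) = (cs.simple i * cs.simple j) ^ (2 * n + 1) by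
      rw [← pow_succ', ← pow_add]; congr 1; omega]

open Classical in
lemma gen_pow (i j : B) (n : ℕ) (t : W) (e : ZMod 2) :
    ((gen cs i * gen cs j) ^ n) (t, e) =
      ((cs.simple i * cs.simple j) ^ n * t * ((cs.simple i * cs.simple j) ^ n)⁻¹,
        e + ∑ k ∈ Finset.range (2 * n),
          if t = ((cs.simple i * cs.simple j) ^ k)⁻¹ * cs.simple j then 1 else 0) := by
  induction n with
  | zero => simp; rfl
  | succ n ih =>
    rw [pow_succ']
    change gen cs i (gen cs j (((gen cs i * gen cs j) ^ n) (t, e))) = _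
    rw [ih]
    simp only [gen]
    rw [show 2 * (n + 1) = 2 * n + 1 + 1 by ring, Finset.sum_range_succ, Finset.sum_range_succ]
    ext
    · simp only [pow_succ', mul_inv_rev, cs.inv_simple, mul_assoc]
    · simp only [conj_eq_iff, conj_eq_iff2, add_assoc]

lemma gen_liftable : M.IsLiftable (gen cs) := by
  classical
  intro i j
  funext ⟨t, e⟩
  rw [gen_pow]
  have hx := cs.simple_mul_simple_pow i j
  rw [two_mul, Finset.sum_range_add]
  simp only [pow_add, hx, one_mul, CharTwo.add_self_eq_zero]
  simp; rfl

/-- The action on `W × ZMod 2`. -/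
noncomputable def act : W →* Function.End (W × ZMod 2) := cs.lift ⟨gen cs, gen_liftable cs⟩

open Classical in
lemma act_word (l : List B) (t : W) (e : ZMod 2) :
    act cs (cs.wordProd l) (t, e) =
      (cs.wordProd l * t * (cs.wordProd l)⁻¹, e + ((cs.rightInvSeq l).count t : ZMod 2)) := by
  induction l with
  | nil => simp; rfl
  | cons i l ih =>
    rw [cs.wordProd_cons, map_mul]
    change act cs (cs.simple i) (act cs (cs.wordProd l) (t, e)) = _
    rw [ih]
    have : act cs (cs.simple i) = gen cs i := cs.lift_apply_simple _ i
    rw [this]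
    simp only [gen, CoxeterSystem.rightInvSeq, List.count_cons]
    ext
    · simp [mul_assoc]
    · have : (cs.wordProd l * t * (cs.wordProd l)⁻¹ = cs.simple i) ↔
          ((cs.wordProd l)⁻¹ * cs.simple i * cs.wordProd l = t) := by
        constructor
        · intro h; rw [← h]; group
        · intro h; rw [← h]; group
      simp only [this, beq_iff_eq]
      push_cast
      rw [add_assoc]

lemma act_refl {t : W} (ht : cs.IsReflection t) : act cs t (t, 0) = (t, 1) := by
  classical
  obtain ⟨u, i, rfl⟩ := ht
  obtain ⟨l, rfl⟩ := cs.wordProd_surjective u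
  set u := cs.wordProd l with hu
  set t := u * cs.simple i * u⁻¹ with ht
  rw [show act cs t = act cs u * act cs (cs.simple i) * act cs u⁻¹ by rw [← map_mul, ← map_mul]]
  have h2 : act cs u⁻¹ (t, 0) =
      (cs.simple i, ((cs.rightInvSeq l.reverse).count t : ZMod 2)) := by
    rw [← cs.wordProd_reverse, act_word, cs.wordProd_reverse, ← hu, ht]
    ext
    · simp [mul_assoc]
    · simp
  have h3 : act cs u (act cs u⁻¹ (t, 0)) = (t, 0) := by
    change (act cs u * act cs u⁻¹) (t, 0) = _
    rw [← map_mul]; simp; rfl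
  change act cs u (act cs (cs.simple i) (act cs u⁻¹ (t, 0))) = _
  rw [h2] at h3 ⊢
  rw [show act cs (cs.simple i) = gen cs i from cs.lift_apply_simple _ i]
  simp only [gen]
  rw [hu, act_word] at h3 ⊢
  rw [Prod.mk.injEq] at h3
  ext
  · simpa using h3.1
  · simp only [if_true, cs.simple_mul_simple_self, one_mul]
    rw [add_right_comm, h3.2]; simp

lemma strong_exchange (l : List B) {t : W} (ht : cs.IsReflection t)
    (hl : cs.length (cs.wordProd l * t) < cs.length (cs.wordProd l)) :
    ∃ j < l.length, cs.wordProd l * t = cs.wordProd (l.eraseIdx j) := by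
  classical
  obtain ⟨m, hm, hm'⟩ := cs.exists_isReduced (cs.wordProd l * t)
  have h1 : act cs (cs.wordProd m) (t, 0) = act cs (cs.wordProd l) (t, 1) := by
    rw [← hm', map_mul, ← act_refl cs ht]; rfl
  rw [act_word, act_word, Prod.mk.injEq] at h1
  have hmem : t ∈ cs.rightInvSeq l := by
    by_contra hn
    rw [List.count_eq_zero_of_not_mem hn] at h1
    have h4 : t ∈ cs.rightInvSeq m := by
      by_contra hn2
      rw [List.count_eq_zero_of_not_mem hn2] at h1
      simp at h1
    have := (cs.isRightInversion_of_mem_rightInvSeq hm h4).2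
    rw [← hm', mul_assoc, ht.mul_self, mul_one] at this
    omega
  obtain ⟨j, hj, rfl⟩ := List.getElem_of_mem hmem
  refine ⟨j, by simpa using hj, ?_⟩
  rw [← List.getD_eq_getElem (cs.rightInvSeq l) 1, cs.wordProd_mul_getD_rightInvSeq]

lemma refl_conj (w : W) (i : B) : cs.IsReflection (w⁻¹ * cs.simple i * w) :=
  ⟨w⁻¹, i, by simp⟩

lemma simple_exchange (l : List B) {i : B}
    (hl : cs.length (cs.simple i * cs.wordProd l) < cs.length (cs.wordProd l)) :
    ∃ j < l.length, cs.simple i * cs.wordProd l = cs.wordProd (l.eraseIdx j) := by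
  have h : cs.wordProd l * ((cs.wordProd l)⁻¹ * cs.simple i * cs.wordProd l) =
    cs.simple i * cs.wordProd l := by group
  have := strong_exchange cs l (refl_conj cs (cs.wordProd l) i) (by rwa [h])
  rwa [h] at this

/-- The basic Bruhat relation. -/
def brel (u w : W) : Prop := ∃ t, cs.IsReflection t ∧ w = u * t ∧ cs.length u < cs.length w

lemma brel_simple (w : W) (i : B) (h : cs.length w < cs.length (cs.simple i * w)) :
    brel cs w (cs.simple i * w) :=
  ⟨_, refl_conj cs w i, by group, h⟩

lemma brel_lift {u w : W} (h : brel cs u w) (i : B) :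
    cs.simple i * u = w ∨ brel cs (cs.simple i * u) (cs.simple i * w) := by
  obtain ⟨t, ht, rfl, hlt⟩ := h
  by_cases hl : cs.length (cs.simple i * u) < cs.length (cs.simple i * (u * t))
  · right
    exact ⟨t, ht, by rw [mul_assoc], hl⟩
  left
  have h0 := ht.length_mul_left_ne (cs.simple i * u)
  rw [mul_assoc] at h0
  have h1 := cs.length_simple_mul u i
  have h2 := cs.length_simple_mul (u * t) i
  -- reduced word for `u * t` starting with `i`
  obtain ⟨m, hm, hm'⟩ := cs.exists_isReduced (cs.simple i * (u * t))
  have hw : cs.wordProd (i :: m) = u * t := by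
    rw [cs.wordProd_cons, ← hm', cs.simple_mul_simple_cancel_left]
  have hut : cs.wordProd (i :: m) * t = u := by rw [hw, mul_assoc, ht.mul_self, mul_one]
  obtain ⟨j, hj, hj'⟩ := strong_exchange cs (i :: m) ht (by rw [hut, hw]; exact hlt)
  rw [hut] at hj'
  cases j with
  | zero =>
    rw [List.eraseIdx_cons_zero] at hj'
    rw [← hw, cs.wordProd_cons, hj']
  | succ j =>
    exfalso
    rw [List.eraseIdx_cons_succ, cs.wordProd_cons] at hj'
    have h3 : cs.simple i * u = cs.wordProd (m.eraseIdx j) := by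
      rw [hj', cs.simple_mul_simple_cancel_left]
    have h4 := cs.length_wordProd_le (m.eraseIdx j)
    rw [← h3] at h4
    have h5 : cs.length (cs.simple i * (u * t)) = m.length := by rw [hm']; exact hm
    have := List.length_eraseIdx_le m j
    simp only [List.length_cons] at hj
    rw [List.length_eraseIdx_of_lt (by omega)] at h4
    omega

/-- Bruhat order. -/
def ble : W → W → Prop := Relation.ReflTransGen (brel cs)

lemma ble_lift {u w : W} (h : ble cs u w) (i : B) :
    ble cs (cs.simple i * u) w ∨ ble cs (cs.simple i * u) (cs.simple i * w) := by
  induction h using Relation.ReflTransGen.head_induction_on with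
  | refl => right; exact Relation.ReflTransGen.refl
  | head h1 h2 ih =>
    rcases brel_lift cs h1 i with h | h
    · left; rw [h]; exact h2
    · rcases ih with ih | ih
      · left; exact Relation.ReflTransGen.head h ih
      · right; exact Relation.ReflTransGen.head h ih

lemma ble_of_sublist {l m : List B} (hs : m.Sublist l) (hl : cs.IsReduced l) :
    ble cs (cs.wordProd m) (cs.wordProd l) := by
  induction hs with
  | slnil => exact Relation.ReflTransGen.refl
  | @cons m l i hs ih =>
    have hl' : cs.IsReduced l := by simpa using hl.drop 1
    refine Relation.ReflTransGen.tail (ih hl') ?_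
    rw [cs.wordProd_cons]
    apply brel_simple
    rw [← cs.wordProd_cons, hl.eq, hl'.eq]; simp
  | @cons_cons m l i hs ih =>
    have hl' : cs.IsReduced l := by simpa using hl.drop 1
    have h1 : brel cs (cs.wordProd l) (cs.simple i * cs.wordProd l) := by
      apply brel_simple
      rw [← cs.wordProd_cons, hl.eq, hl'.eq]; simp
    rw [cs.wordProd_cons, cs.wordProd_cons]
    rcases ble_lift cs (ih hl') i with h | h
    · exact Relation.ReflTransGen.tail h h1
    · exact h

lemma sublist_of_ble {l : List B} {u : W} (h : ble cs u (cs.wordProd l)) :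
    ∃ m : List B, m.Sublist l ∧ cs.wordProd m = u := by
  induction h using Relation.ReflTransGen.head_induction_on with
  | refl => exact ⟨l, List.Sublist.refl _, rfl⟩
  | @head u v h1 h2 ih =>
    obtain ⟨m, hm, rfl⟩ := ih
    obtain ⟨t, ht, h3, h4⟩ := h1
    have h5 : cs.wordProd m * t = u := by rw [h3, mul_assoc, ht.mul_self, mul_one]
    obtain ⟨j, -, hj⟩ := strong_exchange cs m ht (by rwa [h5])
    exact ⟨m.eraseIdx j, (List.eraseIdx_sublist m j).trans hm, by rw [← hj, h5]⟩

lemma subword_property {l l' m : List B} (hl : cs.IsReduced l)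
    (h : cs.wordProd l = cs.wordProd l') (hs : m.Sublist l) :
    ∃ m' : List B, m'.Sublist l' ∧ cs.wordProd m' = cs.wordProd m :=
  sublist_of_ble cs (h ▸ ble_of_sublist cs hs hl)

end Strong

section Sorted

variable (cs : CoxeterSystem M W) (ω : ℕ → B)

/-- The part of `A` from `k` on. -/
def tail (A : Finset ℕ) (k : ℕ) : Finset ℕ := A.filter (k ≤ ·)

lemma mem_tail {A : Finset ℕ} {k a : ℕ} : a ∈ tail A k ↔ a ∈ A ∧ k ≤ a := Finset.mem_filter

/-- Product of a subword. -/
noncomputable def prd (A : Finset ℕ) : W := cs.wordProd (subwordInf ω A)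

lemma sub_union (A C : Finset ℕ) (h : ∀ a ∈ A, ∀ c ∈ C, a < c) :
    subwordInf ω (A ∪ C) = subwordInf ω A ++ subwordInf ω C := by
  unfold subwordInf
  rw [← List.map_append]
  congr 1
  have hn : (A.sort (· ≤ ·) ++ C.sort (· ≤ ·)).Nodup := by
    rw [List.nodup_append]
    refine ⟨Finset.sort_nodup _ _, Finset.sort_nodup _ _, ?_⟩
    intro a ha b hb
    rw [Finset.mem_sort] at ha hb
    exact (h a ha b hb).ne
  have := (List.toFinset_sort (· ≤ ·) hn).2 (by
    rw [List.pairwise_append]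
    refine ⟨Finset.pairwise_sort _ _, Finset.pairwise_sort _ _, ?_⟩
    intro a ha b hb
    rw [Finset.mem_sort] at ha hb
    exact (h a ha b hb).le)
  rw [← this, List.toFinset_append, Finset.sort_toFinset, Finset.sort_toFinset]

lemma sub_singleton (k : ℕ) : subwordInf ω {k} = [ω k] := by
  simp [subwordInf]

lemma sub_empty : subwordInf ω ∅ = [] := by
  simp [subwordInf]

lemma length_sub (A : Finset ℕ) : (subwordInf ω A).length = A.card := by
  simp [subwordInf]

lemma sub_insert (A : Finset ℕ) (k : ℕ) (h : ∀ a ∈ A, k < a) :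
    subwordInf ω (insert k A) = ω k :: subwordInf ω A := by
  rw [Finset.insert_eq, sub_union, sub_singleton]
  · rfl
  · simpa using h

lemma exists_sub_of_sublist {A : Finset ℕ} {m : List B} (h : m.Sublist (subwordInf ω A)) :
    ∃ D ⊆ A, subwordInf ω D = m := by
  unfold subwordInf at h
  obtain ⟨l, hl, rfl⟩ := List.sublist_map_iff.1 h
  refine ⟨l.toFinset, ?_, ?_⟩
  · intro a ha
    rw [List.mem_toFinset] at ha
    simpa using hl.subset ha
  · unfold subwordInf
    rw [(List.toFinset_sort (· ≤ ·) (hl.nodup (Finset.sort_nodup _ _))).2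
      (List.Pairwise.sublist hl (Finset.pairwise_sort _ _))]

lemma sublist_sub {A D : Finset ℕ} (h : D ⊆ A) :
    (subwordInf ω D).Sublist (subwordInf ω A) := by
  unfold subwordInf
  apply List.Sublist.map
  have : D.sort (· ≤ ·) = (A.sort (· ≤ ·)).filter (· ∈ D) := by
    have hn : ((A.sort (· ≤ ·)).filter (· ∈ D)).Nodup := (Finset.sort_nodup _ _).filter _
    rw [← (List.toFinset_sort (· ≤ ·) hn).2 ((Finset.pairwise_sort _ _).filter _)]
    congr 1
    ext a
    simp only [List.mem_toFinset, List.mem_filter, Finset.mem_sort, decide_eq_true_eq]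
    exact ⟨fun ha => ⟨h ha, ha⟩, fun ha => ha.2⟩
  rw [this]
  exact List.filter_sublist

lemma sub_split (A : Finset ℕ) (k : ℕ) :
    subwordInf ω A = subwordInf ω (A.filter (· < k)) ++ subwordInf ω (tail A k) := by
  rw [← sub_union]
  · congr 1
    ext a
    simp only [Finset.mem_union, Finset.mem_filter, mem_tail]
    have := lt_or_ge a k
    tauto
  · intro a ha c hc
    rw [Finset.mem_filter] at ha
    rw [mem_tail] at hc
    omega

lemma tail_of_mem {A : Finset ℕ} {k : ℕ} (h : k ∈ A) :
    tail A k = insert k (tail A (k + 1)) := by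
  ext a
  simp only [Finset.mem_insert, mem_tail]
  constructor
  · rintro ⟨h1, h2⟩
    by_cases a = k
    · tauto
    · right; exact ⟨h1, by omega⟩
  · rintro (rfl | ⟨h1, h2⟩)
    · exact ⟨h, le_rfl⟩
    · exact ⟨h1, by omega⟩

lemma tail_of_not_mem {A : Finset ℕ} {k : ℕ} (h : k ∉ A) :
    tail A k = tail A (k + 1) := by
  ext a
  simp only [mem_tail]
  constructor
  · rintro ⟨h1, h2⟩
    refine ⟨h1, ?_⟩
    by_contra hh
    obtain rfl : a = k := by omega
    exact h h1
  · rintro ⟨h1, h2⟩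
    exact ⟨h1, by omega⟩

lemma sub_tail_of_mem {A : Finset ℕ} {k : ℕ} (h : k ∈ A) :
    subwordInf ω (tail A k) = ω k :: subwordInf ω (tail A (k + 1)) := by
  rw [tail_of_mem h, sub_insert]
  intro a ha
  rw [mem_tail] at ha
  omega

lemma prd_tail_of_mem {A : Finset ℕ} {k : ℕ} (h : k ∈ A) :
    prd cs ω (tail A k) = cs.simple (ω k) * prd cs ω (tail A (k + 1)) := by
  unfold prd
  rw [sub_tail_of_mem ω h, cs.wordProd_cons]

lemma exchange_set (D : Finset ℕ) {i : B}
    (h : cs.length (cs.simple i * prd cs ω D) < cs.length (prd cs ω D)) :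
    ∃ D' ⊆ D, D'.card + 1 = D.card ∧ prd cs ω D' = cs.simple i * prd cs ω D := by
  obtain ⟨j, hj, hj'⟩ := simple_exchange cs _ h
  obtain ⟨D', hD', h'⟩ := exists_sub_of_sublist ω (List.eraseIdx_sublist (subwordInf ω D) j)
  refine ⟨D', hD', ?_, ?_⟩
  · rw [← length_sub ω D', h', List.length_eraseIdx_of_lt hj, ← length_sub ω D]
    omega
  · unfold prd
    rw [h', hj']

/-- Local criterion for sortedness, from `k` on. -/
def Loc (A : Finset ℕ) (k : ℕ) : Prop :=
  ∀ j ≥ k, ¬ cs.IsLeftDescent (prd cs ω (tail A (j + 1))) (ω j)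

lemma tail_eq_empty (A : Finset ℕ) : ∃ N, ∀ k ≥ N, tail A k = ∅ := by
  refine ⟨A.sup id + 1, fun k hk => ?_⟩
  rw [Finset.eq_empty_iff_forall_notMem]
  intro a ha
  rw [mem_tail] at ha
  have := Finset.le_sup (f := id) ha.1
  simp only [id] at this
  omega

lemma Loc.reduced {A : Finset ℕ} {k : ℕ} (h : Loc cs ω A k) :
    cs.IsReduced (subwordInf ω (tail A k)) := by
  obtain ⟨N, hN⟩ := tail_eq_empty A
  have : ∀ n k, N ≤ k + n → Loc cs ω A k → cs.IsReduced (subwordInf ω (tail A k)) := by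
    intro n
    induction n with
    | zero =>
      intro k hk _
      rw [hN k hk, sub_empty]
      simp [CoxeterSystem.IsReduced]
    | succ n ih =>
      intro k hk h
      have h1 := ih (k + 1) (by omega) (fun j hj => h j (by omega))
      by_cases hkA : k ∈ A
      · have h2 := h k le_rfl
        rw [cs.not_isLeftDescent_iff] at h2
        unfold CoxeterSystem.IsReduced at *
        rw [sub_tail_of_mem ω hkA, cs.wordProd_cons, List.length_cons, ← h1]
        exact h2
      · rwa [tail_of_not_mem hkA]
  exact this N k (by omega) h

lemma tail_zero (A : Finset ℕ) : tail A 0 = A := by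
  ext a; simp [mem_tail]

lemma prd_split (A : Finset ℕ) (k : ℕ) :
    prd cs ω A = prd cs ω (A.filter (· < k)) * prd cs ω (tail A k) := by
  unfold prd
  rw [← cs.wordProd_append, ← sub_split]

lemma reduced_tail {A : Finset ℕ} (h : cs.IsReduced (subwordInf ω A)) (k : ℕ) :
    cs.IsReduced (subwordInf ω (tail A k)) := by
  rw [sub_split ω A k] at h
  simpa using h.drop (subwordInf ω (A.filter (· < k))).length

lemma Loc.isSorted {A : Finset ℕ} (h : Loc cs ω A 0) : IsSortedInf cs ω A := by
  refine ⟨by simpa [tail_zero] using h.reduced, ?_⟩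
  intro C hC hp
  by_cases hAC : A = C
  · exact Or.inl hAC
  right
  have hex : ∃ k, ¬ (k ∈ A ↔ k ∈ C) := by
    by_contra hn
    push Not at hn
    exact hAC (Finset.ext hn)
  classical
  let k := Nat.find hex
  have hk : ¬ (k ∈ A ↔ k ∈ C) := Nat.find_spec hex
  have hlt : ∀ j < k, (j ∈ A ↔ j ∈ C) := fun j hj => not_not.1 (Nat.find_min hex hj)
  by_cases hkA : k ∈ A
  · exact ⟨k, hkA, fun hc => hk ⟨fun _ => hc, fun _ => hkA⟩, hlt⟩
  exfalso
  have hkC : k ∈ C := by tauto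
  have hf : A.filter (· < k) = C.filter (· < k) := by
    ext a
    simp only [Finset.mem_filter]
    constructor
    · rintro ⟨h1, h2⟩; exact ⟨(hlt a h2).1 h1, h2⟩
    · rintro ⟨h1, h2⟩; exact ⟨(hlt a h2).2 h1, h2⟩
  change prd cs ω C = prd cs ω A at hp
  rw [prd_split cs ω C k, prd_split cs ω A k, hf] at hp
  have hp := mul_left_cancel hp
  have h1 := h k (Nat.zero_le _)
  apply h1
  rw [← tail_of_not_mem hkA, ← hp]
  unfold CoxeterSystem.IsLeftDescent
  rw [prd_tail_of_mem cs ω hkC, cs.simple_mul_simple_cancel_left]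
  have h2 := reduced_tail cs ω hC k
  have h3 := reduced_tail cs ω hC (k + 1)
  unfold CoxeterSystem.IsReduced at h2 h3
  rw [sub_tail_of_mem ω hkC, cs.wordProd_cons, List.length_cons, ← h3] at h2
  unfold prd
  omega

lemma loc_of_isSorted {A : Finset ℕ} (h : IsSortedInf cs ω A) : Loc cs ω A 0 := by
  intro k _ hd
  by_cases hkA : k ∈ A
  · have h2 := reduced_tail cs ω h.1 k
    have h3 := reduced_tail cs ω h.1 (k + 1)
    unfold CoxeterSystem.IsReduced at h2 h3
    rw [sub_tail_of_mem ω hkA, cs.wordProd_cons, List.length_cons, ← h3] at h2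
    unfold CoxeterSystem.IsLeftDescent prd at hd
    omega
  · obtain ⟨D, hD, hc, hp⟩ := exchange_set cs ω _ hd
    have hDk : ∀ a ∈ D, k < a := fun a ha => by
      have := (mem_tail.1 (hD ha)).2
      omega
    have hkD : k ∉ D := fun hk => (hDk k hk).false
    obtain ⟨E, hE⟩ : ∃ E, E = insert k D := ⟨_, rfl⟩
    obtain ⟨C, hC⟩ : ∃ C, C = A.filter (· < k) ∪ E := ⟨_, rfl⟩
    have hsub : subwordInf ω C = subwordInf ω (A.filter (· < k)) ++ (ω k :: subwordInf ω D) := by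
      rw [hC, sub_union, hE, sub_insert ω D k hDk]
      intro a ha c hc
      rw [Finset.mem_filter] at ha
      rw [hE, Finset.mem_insert] at hc
      rcases hc with rfl | hc
      · exact ha.2
      · exact ha.2.trans (hDk c hc)
    have hpr : cs.wordProd (subwordInf ω C) = cs.wordProd (subwordInf ω A) := by
      rw [hsub, cs.wordProd_append, cs.wordProd_cons]
      unfold prd at hp
      rw [hp, cs.simple_mul_simple_cancel_left, ← cs.wordProd_append, ← tail_of_not_mem hkA,
        ← sub_split]
    have hlen : (subwordInf ω C).length = (subwordInf ω A).length := by
      rw [hsub, sub_split ω A k, tail_of_not_mem hkA]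
      simp only [List.length_append, List.length_cons, length_sub]
      omega
    have hred : cs.IsReduced (subwordInf ω C) := by
      unfold CoxeterSystem.IsReduced
      rw [hpr, hlen]
      exact h.1
    have hkC : k ∈ C := by simp [hC, hE]
    rcases h.2 C hred hpr with hAC | ⟨j, hjA, hjC, hj⟩
    · exact hkA (hAC ▸ hkC)
    · rcases lt_trichotomy j k with hjk | rfl | hjk
      · apply hjC
        rw [hC, Finset.mem_union, Finset.mem_filter]
        exact Or.inl ⟨hjA, hjk⟩
      · exact hkA hjA
      · exact hkA ((hj k hjk).2 hkC)

/-- One step of the greedy comparison. -/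
lemma greedy_step {A : Finset ℕ} {k : ℕ} {D : Finset ℕ}
    (h : ¬ cs.IsLeftDescent (prd cs ω (tail A (k + 1))) (ω k))
    (hD : ∀ a ∈ D, k ≤ a)
    (hp : prd cs ω D = prd cs ω (tail A (k + 1)) ∨
      prd cs ω D = cs.simple (ω k) * prd cs ω (tail A (k + 1))) :
    ∃ D' ⊆ tail D (k + 1), prd cs ω D' = prd cs ω (tail A (k + 1)) := by
  have hDt : tail D k = D := by
    ext a; rw [mem_tail]; exact ⟨fun h => h.1, fun h => ⟨h, hD a h⟩⟩
  have key : prd cs ω (tail D (k + 1)) = prd cs ω (tail A (k + 1)) ∨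
      prd cs ω (tail D (k + 1)) = cs.simple (ω k) * prd cs ω (tail A (k + 1)) := by
    by_cases hk : k ∈ D
    · have := prd_tail_of_mem cs ω hk
      rw [hDt] at this
      rw [this] at hp
      rcases hp with hp | hp
      · right
        rw [← hp, cs.simple_mul_simple_cancel_left]
      · left
        exact mul_left_cancel hp
    · rwa [← tail_of_not_mem hk, hDt]
  rcases key with key | key
  · exact ⟨_, subset_rfl, key⟩
  · rw [cs.not_isLeftDescent_iff] at h
    obtain ⟨D', h1, -, h2⟩ := exchange_set cs ω (tail D (k + 1)) (i := ω k) (by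
      rw [key, cs.simple_mul_simple_cancel_left]; omega)
    refine ⟨D', h1, ?_⟩
    rw [h2, key, cs.simple_mul_simple_cancel_left]

lemma greedy_s17 {A : Finset ℕ} {k : ℕ} {D : Finset ℕ} (h : Loc cs ω A k)
    (hD : ∀ a ∈ D, k ≤ a)
    (hp : prd cs ω D = prd cs ω (tail A (k + 1))) (n : ℕ) (hn : k + 1 ≤ n) :
    ∃ D' ⊆ tail D n, prd cs ω D' = prd cs ω (tail A n) := by
  obtain ⟨d, rfl⟩ := Nat.exists_eq_add_of_le hn
  clear hn
  induction d with
  | zero => exact greedy_step cs ω (h k le_rfl) hD (Or.inl hp)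
  | succ d ih =>
    obtain ⟨D', h1, h2⟩ := ih
    rw [← add_assoc]
    set n := k + 1 + d with hn
    have hD' : ∀ a ∈ D', n ≤ a := fun a ha => (mem_tail.1 (h1 ha)).2
    obtain ⟨D'', h3, h4⟩ := greedy_step cs ω (A := A) (h n (by omega)) hD' (by
      by_cases hnA : n ∈ A
      · right; rw [h2, prd_tail_of_mem cs ω hnA]
      · left; rw [h2, tail_of_not_mem hnA])
    refine ⟨D'', fun a ha => ?_, h4⟩
    have h5 := mem_tail.1 (h3 ha)
    have h6 := mem_tail.1 (h1 h5.1)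
    exact mem_tail.2 ⟨h6.1, h5.2⟩

lemma loc_insert {A C : Finset ℕ} (hA : Loc cs ω A 0) (hC : Loc cs ω C 0) {x : ℕ}
    (hxC : x ∈ C) (hxA : x ∉ A) (hx : ∀ a ∈ C, a < x → a ∈ A) :
    Loc cs ω (insert x A) 0 := by
  have hbig : Loc cs ω (insert x A) x := by
    intro j hj
    have : tail (insert x A) (j + 1) = tail A (j + 1) := by
      ext a
      simp only [mem_tail, Finset.mem_insert]
      constructor
      · rintro ⟨rfl | h, h'⟩
        · omega
        · exact ⟨h, h'⟩
      · rintro ⟨h, h'⟩; exact ⟨Or.inr h, h'⟩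
    rw [this]
    exact hA j (Nat.zero_le _)
  suffices hs : ∀ k, k < x → Loc cs ω (insert x A) (k + 1) → Loc cs ω (insert x A) k by
    have : ∀ n k, k + n = x → Loc cs ω (insert x A) k := by
      intro n
      induction n with
      | zero => rintro k rfl; exact hbig
      | succ n ih => intro k hk; exact hs k (by omega) (ih (k + 1) (by omega))
    exact this x 0 (by omega)
  intro k hkx hloc j hj
  rcases Nat.eq_or_lt_of_le hj with rfl | hj
  swap
  · exact hloc j hj
  intro hd
  set I := (tail A (k + 1)).filter (· < x) with hI
  set U := tail A (x + 1) with hU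
  have hIlt : ∀ a ∈ I, a < x := fun a ha => (Finset.mem_filter.1 ha).2
  have hIgt : ∀ a ∈ I, k < a := fun a ha => by
    have := (mem_tail.1 (Finset.mem_filter.1 ha).1).2
    omega
  have hUgt : ∀ a ∈ U, x < a := fun a ha => by
    have := (mem_tail.1 ha).2
    omega
  have e1 : subwordInf ω (tail A (k + 1)) = subwordInf ω I ++ subwordInf ω U := by
    rw [← sub_union]
    · congr 1
      ext a
      simp only [hI, hU, Finset.mem_union, Finset.mem_filter, mem_tail]
      constructor
      · rintro ⟨h1, h2⟩
        rcases lt_trichotomy a x with h | rfl | h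
        · exact Or.inl ⟨⟨h1, h2⟩, h⟩
        · exact absurd h1 hxA
        · exact Or.inr ⟨h1, h⟩
      · rintro (⟨h, -⟩ | ⟨h1, h2⟩)
        · exact h
        · exact ⟨h1, by omega⟩
    · intro a ha c hc
      exact (hIlt a ha).trans (hUgt c hc)
  have e2 : subwordInf ω (tail (insert x A) (k + 1)) =
      (subwordInf ω I ++ [ω x]) ++ subwordInf ω U := by
    rw [List.append_assoc, List.singleton_append, ← sub_insert ω U x hUgt, ← sub_union]
    · congr 1
      ext a
      simp only [hI, hU, Finset.mem_union, Finset.mem_filter, mem_tail, Finset.mem_insert]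
      constructor
      · rintro ⟨rfl | h1, h2⟩
        · exact Or.inr (Or.inl rfl)
        · rcases lt_trichotomy a x with h | rfl | h
          · exact Or.inl ⟨⟨h1, h2⟩, h⟩
          · exact absurd h1 hxA
          · exact Or.inr (Or.inr ⟨h1, h⟩)
      · rintro (⟨h, -⟩ | rfl | ⟨h1, h2⟩)
        · exact ⟨Or.inr h.1, h.2⟩
        · exact ⟨Or.inl rfl, by omega⟩
        · exact ⟨Or.inr h1, by omega⟩
    · intro a ha c hc
      rw [Finset.mem_insert] at hc
      rcases hc with rfl | hc
      · exact hIlt a ha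
      · exact (hIlt a ha).trans (hUgt c hc)
  set s := cs.simple (ω k) with hs
  set a := cs.wordProd (subwordInf ω I) with ha
  set r := cs.simple (ω x) with hr
  set u := cs.wordProd (subwordInf ω U) with hu
  have hv : prd cs ω (tail A (k + 1)) = a * u := by
    unfold prd; rw [e1, cs.wordProd_append]
  have hv' : prd cs ω (tail (insert x A) (k + 1)) = a * r * u := by
    unfold prd
    rw [e2, cs.wordProd_append, cs.wordProd_append, cs.wordProd_singleton]
  have hredA : cs.IsReduced (subwordInf ω (tail A (k + 1))) :=
    Loc.reduced cs ω (k := k + 1) (fun j _ => hA j (Nat.zero_le _))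
  have hredA' := hloc.reduced
  have hredar : cs.IsReduced (subwordInf ω I ++ [ω x]) := by
    rw [e2] at hredA'
    have := hredA'.take (subwordInf ω I ++ [ω x]).length
    rwa [List.take_left] at this
  have l1 : cs.length (a * u) = I.card + U.card := by
    have := hredA.eq
    rw [← hv]
    unfold prd
    rw [this, e1, List.length_append, length_sub, length_sub]
  have l2 : cs.length (a * r * u) = I.card + 1 + U.card := by
    have := hredA'.eq
    rw [← hv']
    unfold prd
    rw [this, e2, List.length_append, List.length_append, length_sub, length_sub]
    simp
  have d1 := hA k (Nat.zero_le _)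
  rw [cs.not_isLeftDescent_iff, hv] at d1
  rw [cs.isLeftDescent_iff, hv'] at hd
  have hbr : brel cs (a * u) (a * r * u) :=
    ⟨u⁻¹ * r * u, refl_conj cs u (ω x), by group, by omega⟩
  have hsa : s * a = a * r := by
    rcases brel_lift cs hbr (ω k) with h | ⟨t, -, -, h⟩
    · rw [← hs, ← mul_assoc] at h
      exact mul_right_cancel h
    · omega
  -- now the contradiction with `C`
  set J := (tail C (k + 1)).filter (· < x) with hJ
  set Z := tail C (x + 1) with hZ
  have hJI : J ⊆ I := by
    intro b hb
    rw [hJ, Finset.mem_filter, mem_tail] at hb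
    rw [hI, Finset.mem_filter, mem_tail]
    exact ⟨⟨hx b hb.1.1 hb.2, hb.1.2⟩, hb.2⟩
  have e3 : subwordInf ω (tail C (k + 1)) = (subwordInf ω J ++ [ω x]) ++ subwordInf ω Z := by
    have : tail (tail C (k + 1)) x = tail C x := by
      ext b
      simp only [mem_tail]
      constructor
      · rintro ⟨⟨h1, _⟩, h2⟩; exact ⟨h1, h2⟩
      · rintro ⟨h1, h2⟩; exact ⟨⟨h1, by omega⟩, h2⟩
    rw [sub_split ω (tail C (k + 1)) x, this, sub_tail_of_mem ω hxC]
    simp [hJ, hZ]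
  obtain ⟨m, hm, hmp⟩ := subword_property cs (l' := ω k :: subwordInf ω I) hredar (by
    rw [cs.wordProd_append, cs.wordProd_singleton, cs.wordProd_cons]
    exact hsa.symm) ((sublist_sub ω hJI).append (List.Sublist.refl [ω x]))
  rw [← sub_insert ω I k hIgt] at hm
  obtain ⟨D, hDsub, rfl⟩ := exists_sub_of_sublist ω hm
  have hDlt : ∀ b ∈ D, k ≤ b ∧ b < x := by
    intro b hb
    have := hDsub hb
    rw [Finset.mem_insert] at this
    rcases this with rfl | h
    · exact ⟨le_rfl, hkx⟩
    · exact ⟨(hIgt b h).le, hIlt b h⟩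
  have hZgt : ∀ b ∈ Z, x < b := fun b hb => by
    have := (mem_tail.1 hb).2
    omega
  have hp : prd cs ω (D ∪ Z) = prd cs ω (tail C (k + 1)) := by
    unfold prd
    rw [e3, sub_union, cs.wordProd_append, hmp, ← cs.wordProd_append]
    intro b hb c hc
    exact (hDlt b hb).2.trans (hZgt c hc)
  obtain ⟨D', hD', hp'⟩ := greedy_s17 cs ω (A := C) (k := k) (D := D ∪ Z)
    (fun j _ => hC j (Nat.zero_le _)) (by
      intro b hb
      rw [Finset.mem_union] at hb
      rcases hb with hb | hb
      · exact (hDlt b hb).1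
      · have := hZgt b hb; omega) hp x hkx
  have hD'Z : D' ⊆ Z := by
    intro b hb
    have h1 := mem_tail.1 (hD' hb)
    rcases Finset.mem_union.1 h1.1 with h | h
    · have := (hDlt b h).2; omega
    · exact h
  have hr1 : cs.IsReduced (subwordInf ω (tail C x)) :=
    Loc.reduced cs ω (fun j _ => hC j (Nat.zero_le _))
  have h3 := hr1.eq
  rw [show cs.wordProd (subwordInf ω (tail C x)) = prd cs ω (tail C x) from rfl, ← hp',
    sub_tail_of_mem ω hxC, List.length_cons, length_sub] at h3
  have h4 := cs.length_wordProd_le (subwordInf ω D')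
  rw [show cs.wordProd (subwordInf ω D') = prd cs ω D' from rfl, length_sub] at h4
  have h5 := Finset.card_le_card hD'Z
  rw [hZ] at h5
  omega

lemma loc_union {A C : Finset ℕ} (hA : Loc cs ω A 0) (hC : Loc cs ω C 0) :
    Loc cs ω (A ∪ C) 0 := by
  induction hn : (C \ A).card generalizing A with
  | zero =>
    rw [Finset.card_eq_zero, Finset.sdiff_eq_empty_iff_subset] at hn
    rwa [Finset.union_eq_left.2 hn]
  | succ n ih =>
    have hne : (C \ A).Nonempty := Finset.card_pos.1 (by omega)
    have hmem := Finset.min'_mem _ hne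
    set x := (C \ A).min' hne with hx
    have hmem' := Finset.mem_sdiff.1 hmem
    have h1 := loc_insert cs ω hA hC hmem'.1 hmem'.2 (by
      intro a ha hax
      by_contra hn
      have := Finset.min'_le _ a (Finset.mem_sdiff.2 ⟨ha, hn⟩)
      omega)
    have h2 := ih h1 (by
      rw [Finset.sdiff_insert, Finset.card_erase_of_mem hmem, hn]; rfl)
    rwa [Finset.insert_union, Finset.insert_eq_of_mem (Finset.mem_union_right _ hmem'.1)] at h2

end Sorted

/-- for an infinite Coxeter system and a semi-infinite sorting word `ω`
with infinitely many group elements occurring as subwords, the ω-sorting order is a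
lattice: joins are given by unions of ω-sorted index sets, and meets exist. -/
theorem infinite_sorting_order_lattice (cs : CoxeterSystem M W) [Infinite W]
    (ω : ℕ → B)
    (hinf : {u : W | ∃ A : Finset ℕ, cs.wordProd (subwordInf ω A) = u}.Infinite) :
    (∀ A C : Finset ℕ, IsSortedInf cs ω A → IsSortedInf cs ω C →
      IsSortedInf cs ω (A ∪ C)) ∧
    (∀ A C : Finset ℕ, IsSortedInf cs ω A → IsSortedInf cs ω C →
      ∃ D : Finset ℕ, IsSortedInf cs ω D ∧ D ⊆ A ∧ D ⊆ C ∧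
        ∀ D' : Finset ℕ, IsSortedInf cs ω D' → D' ⊆ A → D' ⊆ C → D' ⊆ D) := by
  have hU : ∀ A C : Finset ℕ, IsSortedInf cs ω A → IsSortedInf cs ω C →
      IsSortedInf cs ω (A ∪ C) := fun A C hA hC =>
    Loc.isSorted cs ω (loc_union cs ω (loc_of_isSorted cs ω hA) (loc_of_isSorted cs ω hC))
  refine ⟨hU, fun A C hA hC => ?_⟩
  classical
  have h0 : IsSortedInf cs ω ∅ := by
    apply Loc.isSorted
    intro j _
    have : tail ∅ (j + 1) = ∅ := rfl
    rw [this]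
    unfold prd
    rw [sub_empty, cs.wordProd_nil]
    exact cs.not_isLeftDescent_one _
  refine ⟨((A ∩ C).powerset.filter (IsSortedInf cs ω)).sup id, ?_, ?_, ?_, ?_⟩
  · apply Finset.sup_induction
    · exact h0
    · intro X hX Y hY
      exact hU X Y hX hY
    · intro X hX
      exact (Finset.mem_filter.1 hX).2
  · apply Finset.sup_le
    intro X hX
    exact (Finset.mem_powerset.1 (Finset.mem_filter.1 hX).1).trans Finset.inter_subset_left
  · apply Finset.sup_le
    intro X hX
    exact (Finset.mem_powerset.1 (Finset.mem_filter.1 hX).1).trans Finset.inter_subset_right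
  · intro D' hD' h1 h2
    exact Finset.le_sup (f := id)
      (Finset.mem_filter.2 ⟨Finset.mem_powerset.2 (Finset.subset_inter h1 h2), hD'⟩)

end SortingPaper
end
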